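/- The Lie algebra g_φ is finite dimensional if and only if φ is a polynomial. Moreover, when φ is a polynomial with ℓ nonzero coefficients, dim_ℂ g_φ = k + 2, where k = ℓ+2 if φ(0) = φ'(0) = 0, k = ℓ+1 if exactly one of φ(0), φ'(0) is zero, and k = ℓ if both φ(0) ≠ 0 and φ'(0) ≠ 0. -/

import Mathlib

open Matrix
open scoped ContDiff

attribute [local instance] Matrix.normedAddCommGroup Matrix.normedSpace

noncomputable section

abbrev MatC (N : ℕ) := Matrix (Fin N) (Fin N) ℂ

/-- `J = Σ_{k=1}^N k E_{k,k}`. -/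
def Jmat (N : ℕ) : MatC N := Matrix.diagonal fun k => ((k : ℕ) + 1 : ℂ)

/-- `A = Σ_{k=1}^{N-1} a_k E_{k+1,k}`. -/
def Amat (N : ℕ) (a : ℕ → ℝ) : MatC N :=
  Matrix.of fun i j => if (i : ℕ) = (j : ℕ) + 1 then ((a ((j : ℕ) + 1) : ℝ) : ℂ) else 0

/-- the right-acting operator `𝒟`, `(Q·𝒟)(x) = x Q'(x) + x Q(x)(A−1)` -/
def OpD (N : ℕ) (a : ℕ → ℝ) : (ℝ → MatC N) → ℝ → MatC N := fun Q x =>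
  (x : ℂ) • deriv Q x + (x : ℂ) • (Q x * (Amat N a - 1))

/-- the right-acting operator `𝒟†`,
`(Q·𝒟†)(x) = −x Q'(x) − Q(x)(1+ν+J) + (xφ'(x) − x) Q(x)` -/
def OpDdag (N : ℕ) (ν : ℝ) (φ : ℂ → ℂ) : (ℝ → MatC N) → ℝ → MatC N := fun Q x =>
  -((x : ℂ) • deriv Q x) - Q x * (((1 : ℂ) + (ν : ℂ)) • (1 : MatC N) + Jmat N) +
    ((x : ℂ) * deriv φ (x : ℂ) - (x : ℂ)) • Q x

/-- the right-acting multiplication operator `m`, `(Q·m)(x) = x Q(x)` -/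
def OpM (N : ℕ) : (ℝ → MatC N) → ℝ → MatC N := fun Q x => (x : ℂ) • Q x

/-- the right-acting multiplication operator `m_j`, `(Q·m_j)(x) = x^j φ^{(j)}(x) Q(x)` -/
def OpMj (N : ℕ) (φ : ℂ → ℂ) (j : ℕ) : (ℝ → MatC N) → ℝ → MatC N := fun Q x =>
  ((x : ℂ) ^ j * iteratedDeriv j φ (x : ℂ)) • Q x

/-- the Lie bracket of right-acting operators: since `Q·(𝒮𝒯) = (Q·𝒮)·𝒯`, the product `𝒮𝒯`
acts as `T ∘ S`, and `[𝒮,𝒯] = 𝒮𝒯 − 𝒯𝒮` acts as `Q ↦ T (S Q) − S (T Q)`. -/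
def rbrk {N : ℕ} (S T : (ℝ → MatC N) → ℝ → MatC N) : (ℝ → MatC N) → ℝ → MatC N :=
  fun Q => T (S Q) - S (T Q)

/-- the Lie algebra `g_φ`, i.e. the complex span of `{1, 𝒟, 𝒟†, m, m₁, m₂, …}` inside the
space of right-acting operators -/
def gphi (N : ℕ) (a : ℕ → ℝ) (ν : ℝ) (φ : ℂ → ℂ) :
    Submodule ℂ ((ℝ → MatC N) → ℝ → MatC N) :=
  Submodule.span ℂ
    ({id, OpD N a, OpDdag N ν φ, OpM N} ∪ Set.range fun j : ℕ => OpMj N φ (j + 1))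

/-!
`g_φ` is the sum of the space of multiplications by `1`, `x` and `x^j φ^{(j)}(x)` and of the span of
`𝒟` and `𝒟†`. These two are independent and the second is a plane: in a linear relation evaluated at
the constant function `1`, the diagonal entries of `J` are the only ones that differ, so `𝒟†` does
not occur, and then the derivative in `𝒟` shows that `𝒟` does not occur either. It remains to find
the dimension of a space of functions of one variable.

The `n`-th derivative of `x^j φ^{(j)}` at `0` is `n(n-1)⋯(n-j+1) φ^{(n)}(0)`. So a linear relation
between these functions gives a nonzero polynomial in `n` that vanishes whenever `φ^{(n)}(0) ≠ 0`,
and `φ` is a polynomial. Conversely, if `φ` is a polynomial, the span of the `x^j φ^{(j)}` with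
`j ≥ 1` is stable under `x d/dx` and contains `x φ'`. Since the monomials are eigenvectors of
`x d/dx` with distinct eigenvalues, it contains every nonconstant monomial of `φ`.
-/

lemma mem_of_sum_eigenvectors_mem {ι K V : Type*} [Field K] [AddCommGroup V] [Module K V]
    {T : Module.End K V} {U : Submodule K V} (hU : U ≤ U.comap T) {s : Finset ι} {μ : ι → K}
    (hμ : Set.InjOn μ s) {v : ι → V} (hv : ∀ i ∈ s, T (v i) = μ i • v i)
    (hsum : ∑ i ∈ s, v i ∈ U) {i : ι} (hi : i ∈ s) : v i ∈ U := by
  classical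
  have aeval_v (q : Polynomial K) {k : ι} (hk : k ∈ s) :
      Polynomial.aeval T q (v k) = q.eval (μ k) • v k := by
    obtain hvk | hvk := eq_or_ne (v k) 0
    · simp [hvk]
    · exact Module.End.aeval_apply_of_hasEigenvector
        ⟨Module.End.mem_eigenspace_iff.mpr (hv k hk), hvk⟩
  have proj : Polynomial.aeval T (Lagrange.basis s μ i) (∑ k ∈ s, v k) = v i := by
    rw [map_sum, Finset.sum_eq_single_of_mem i hi, aeval_v _ hi, Lagrange.eval_basis_self hμ hi,
      one_smul]
    intro k hk hki
    rw [aeval_v _ hk, Lagrange.eval_basis_of_ne hki.symm hk, zero_smul]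
  exact proj ▸ Polynomial.aeval_apply_smul_mem_of_le_comap hsum _ T hU

section Polynomial

open Polynomial

variable {K : Type*} [Field K]

/-- The Euler operator `X d/dX` on polynomials, whose eigenvectors are the monomials. -/
def eulerOp : Module.End K K[X] := LinearMap.mulLeft K X ∘ₗ derivative

lemma eulerOp_apply (q : K[X]) : eulerOp q = X * derivative q := rfl

lemma eulerOp_monomial (n : ℕ) (c : K) : eulerOp (monomial n c) = (n : K) • monomial n c := by
  cases n with
  | zero => simp [eulerOp_apply]
  | succ n => simp [eulerOp_apply, X_mul_monomial, smul_monomial, mul_comm]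

lemma eulerOp_mul (p q : K[X]) : eulerOp (p * q) = eulerOp p * q + p * eulerOp q := by
  simp only [eulerOp_apply, derivative_mul]
  ring

lemma eulerOp_X_pow_mul_iterate_derivative (p : K[X]) (j : ℕ) :
    eulerOp (X ^ j * derivative^[j] p) =
      (j : K) • (X ^ j * derivative^[j] p) + X ^ (j + 1) * derivative^[j + 1] p := by
  rw [eulerOp_mul, X_pow_eq_monomial, eulerOp_monomial, ← X_pow_eq_monomial, smul_mul_assoc,
    eulerOp_apply (derivative^[j] p), ← mul_assoc, ← pow_succ, ← Function.iterate_succ_apply'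
      derivative]

lemma span_X_pow_mul_iterate_derivative_le_comap_eulerOp (p : K[X]) :
    Submodule.span K (Set.range fun j : ℕ => X ^ (j + 1) * derivative^[j + 1] p) ≤
      (Submodule.span K (Set.range fun j : ℕ => X ^ (j + 1) * derivative^[j + 1] p)).comap
        eulerOp := by
  rw [Submodule.span_le]
  rintro _ ⟨j, rfl⟩
  rw [SetLike.mem_coe, Submodule.mem_comap, eulerOp_X_pow_mul_iterate_derivative]
  exact Submodule.add_mem _ (Submodule.smul_mem _ _ (Submodule.subset_span ⟨j, rfl⟩))
    (Submodule.subset_span ⟨j + 1, rfl⟩)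

lemma coeff_X_pow_mul_iterate_derivative {R : Type*} [Semiring R] (p : R[X]) (j n : ℕ) :
    (X ^ j * derivative^[j] p).coeff n = n.descFactorial j • p.coeff n := by
  rw [coeff_X_pow_mul']
  split_ifs with hjn
  · rw [coeff_iterate_derivative, Nat.sub_add_cancel hjn]
  · rw [Nat.descFactorial_eq_zero_iff_lt.mpr (not_le.mp hjn), zero_smul]

lemma mem_span_X_pow_of_support_subset {R : Type*} [Semiring R] {q : R[X]} {s : Finset ℕ}
    (h : q.support ⊆ s) : q ∈ Submodule.span R ((fun i : ℕ => (X ^ i : R[X])) '' s) := by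
  rw [q.as_sum_support]
  refine Submodule.sum_mem _ fun i hi => ?_
  rw [← smul_X_eq_monomial]
  exact Submodule.smul_mem _ _ (Submodule.subset_span ⟨i, h hi, rfl⟩)

lemma span_X_pow_mul_iterate_derivative [CharZero K] (p : K[X]) :
    Submodule.span K (Set.range fun j : ℕ => X ^ (j + 1) * derivative^[j + 1] p) =
      Submodule.span K ((fun i : ℕ => (X ^ i : K[X])) '' (p.support.erase 0)) := by
  apply le_antisymm <;> rw [Submodule.span_le]
  · rintro _ ⟨j, rfl⟩
    refine mem_span_X_pow_of_support_subset fun n hn => ?_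
    rw [mem_support_iff, coeff_X_pow_mul_iterate_derivative] at hn
    refine Finset.mem_erase.mpr ⟨?_, mem_support_iff.mpr (right_ne_zero_of_smul hn)⟩
    rintro rfl
    exact hn (by simp)
  · rintro _ ⟨i, hi, rfl⟩
    obtain ⟨hi0, hip⟩ := Finset.mem_erase.mp hi
    have sum_mem : ∑ n ∈ p.support, (n : K) • monomial n (p.coeff n) ∈
        Submodule.span K (Set.range fun j : ℕ => X ^ (j + 1) * derivative^[j + 1] p) := by
      simp_rw [← eulerOp_monomial, ← map_sum, ← p.as_sum_support]
      exact Submodule.subset_span ⟨0, by simp [eulerOp_apply]⟩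
    have monomial_mem := mem_of_sum_eigenvectors_mem
      (span_X_pow_mul_iterate_derivative_le_comap_eulerOp p) Nat.cast_injective.injOn
      (fun n _ => by rw [map_smul, eulerOp_monomial]) sum_mem hip
    rw [← smul_X_eq_monomial, smul_smul] at monomial_mem
    exact (Submodule.smul_mem_iff _
      (mul_ne_zero (Nat.cast_ne_zero.mpr hi0) (mem_support_iff.mp hip))).mp monomial_mem

lemma span_one_X_union_X_pow_mul_iterate_derivative [CharZero K] (p : K[X]) :
    Submodule.span K ({1, X} ∪ Set.range fun j : ℕ => X ^ (j + 1) * derivative^[j + 1] p) =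
      Submodule.span K ((fun i : ℕ => (X ^ i : K[X])) ''
        (insert 0 (insert 1 p.support) : Finset ℕ)) := by
  have h : insert 0 (insert 1 p.support) = {0, 1} ∪ p.support.erase 0 := by
    ext i
    by_cases hi : i = 0 <;> simp [hi]
  rw [h, Finset.coe_union, Set.image_union, Submodule.span_union, Submodule.span_union,
    span_X_pow_mul_iterate_derivative]
  simp [Set.image_pair]

lemma card_insert_zero_insert_one_support {R : Type*} [Semiring R] [DecidableEq R] (p : R[X]) :
    (insert 0 (insert 1 p.support)).card =
      p.support.card + (if p.coeff 1 = 0 then 1 else 0) + (if p.coeff 0 = 0 then 1 else 0) := by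
  simp only [Finset.card_insert_eq_ite, Finset.mem_insert, mem_support_iff, zero_ne_one, false_or]
  split_ifs <;> simp_all

lemma iteratedDeriv_polynomial_eval {𝕜 : Type*} [NontriviallyNormedField 𝕜] (p : 𝕜[X]) (n : ℕ) :
    iteratedDeriv n (fun z => p.eval z) = fun z => (derivative^[n] p).eval z := by
  induction n with
  | zero => simp
  | succ n ih =>
    rw [iteratedDeriv_succ, ih, Function.iterate_succ_apply']
    ext z
    exact Polynomial.deriv _

/-- The falling factorials `X (X - 1) ⋯ (X - j + 1)`, bundled as a sequence of polynomials with one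
member in each degree. -/
def descPochhammerSequence (R : Type*) [Ring R] [Nontrivial R] [NoZeroDivisors R] :
    Polynomial.Sequence R where
  elems' := descPochhammer R
  degree_eq' i := by
    rw [degree_eq_natDegree (monic_descPochhammer R i).ne_zero, descPochhammer_natDegree]

end Polynomial

section EntireFunction

lemma iteratedDeriv_pow_mul_iteratedDeriv_zero {𝕜 : Type*} [NontriviallyNormedField 𝕜]
    {f : 𝕜 → 𝕜} {n j : ℕ} (hf : ContDiff 𝕜 (n + j : ℕ) f) :
    iteratedDeriv n (fun z => z ^ j * iteratedDeriv j f z) 0 =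
      n.descFactorial j * iteratedDeriv n f 0 := by
  have hfj : ContDiff 𝕜 n (iteratedDeriv j f) :=
    iteratedDeriv_eq_iterate (f := f) ▸ ContDiff.iterate_deriv' n j hf
  rw [iteratedDeriv_fun_mul (by fun_prop) hfj.contDiffAt]
  simp only [iteratedDeriv_fun_pow_zero]
  by_cases hjn : j ≤ n
  · have iteratedDeriv_comp : iteratedDeriv (n - j) (iteratedDeriv j f) = iteratedDeriv n f := by
      simp only [iteratedDeriv_eq_iterate, ← Function.iterate_add_apply, Nat.sub_add_cancel hjn]
    rw [Finset.sum_eq_single_of_mem j (Finset.mem_range_succ_iff.mpr hjn)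
      fun i _ hij => by simp [hij], if_pos rfl, iteratedDeriv_comp,
      Nat.descFactorial_eq_factorial_mul_choose]
    push_cast
    ring
  · rw [Nat.descFactorial_eq_zero_iff_lt.mpr (not_le.mp hjn), Nat.cast_zero, zero_mul]
    refine Finset.sum_eq_zero fun i hi => ?_
    have hij : i ≠ j := by grind
    simp [hij]

lemma eq_of_differentiable_of_forall_ofReal_eq {E : Type*} [NormedAddCommGroup E] [NormedSpace ℂ E]
    [CompleteSpace E] {f g : ℂ → E} (hf : Differentiable ℂ f) (hg : Differentiable ℂ g)
    (h : ∀ x : ℝ, f x = g x) : f = g := by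
  have ofReal_tendsto : Filter.Tendsto Complex.ofReal (nhdsWithin 0 {0}ᶜ) (nhdsWithin 0 {0}ᶜ) := by
    refine tendsto_nhdsWithin_of_tendsto_nhds_of_eventually_within _
      ((Complex.continuous_ofReal.tendsto' 0 0 rfl).mono_left nhdsWithin_le_nhds) ?_
    filter_upwards [self_mem_nhdsWithin] with x hx using Complex.ofReal_ne_zero.mpr hx
  exact AnalyticOnNhd.eq_of_frequently_eq (fun z _ => hf.analyticAt z) (fun z _ => hg.analyticAt z)
    (ofReal_tendsto.frequently (Filter.Frequently.of_forall h))

variable {φ : ℂ → ℂ}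

lemma exists_polynomial_of_finite_iteratedDeriv_zero (hφ : Differentiable ℂ φ)
    (hfin : {n : ℕ | iteratedDeriv n φ 0 ≠ 0}.Finite) :
    ∃ p : Polynomial ℂ, ∀ z : ℂ, φ z = p.eval z := by
  refine ⟨∑ n ∈ hfin.toFinset,
    Polynomial.monomial n ((n.factorial : ℂ)⁻¹ * iteratedDeriv n φ 0), fun z => ?_⟩
  rw [← Complex.taylorSeries_eq_of_entire' 0 z hφ, tsum_eq_sum (s := hfin.toFinset)]
  · simp [Polynomial.eval_finsetSum]
  · intro n hn
    have hn0 : iteratedDeriv n φ 0 = 0 := by simpa using hn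
    simp [hn0]

lemma sum_mul_descFactorial_mul_iteratedDeriv_eq_zero (hφ : Differentiable ℂ φ) {s : Finset ℕ}
    {g : ℕ → ℂ} (h : ∀ x : ℝ, ∑ j ∈ s, g j * ((x : ℂ) ^ j * iteratedDeriv j φ x) = 0) (n : ℕ) :
    ∑ j ∈ s, g j * (n.descFactorial j * iteratedDeriv n φ 0) = 0 := by
  have hsmooth (j : ℕ) : ContDiff ℂ ∞ fun z => g j * (z ^ j * iteratedDeriv j φ z) :=
    contDiff_const.mul ((contDiff_id.pow j).mul
      (iteratedDeriv_eq_iterate (f := φ) ▸ hφ.contDiff.iterate_deriv j))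
  have h_complex : (fun z => ∑ j ∈ s, g j * (z ^ j * iteratedDeriv j φ z)) = fun _ => 0 :=
    eq_of_differentiable_of_forall_ofReal_eq
      (Differentiable.fun_sum fun j _ => (hsmooth j).differentiable (by simp))
      (differentiable_const 0) h
  calc ∑ j ∈ s, g j * (n.descFactorial j * iteratedDeriv n φ 0)
      = ∑ j ∈ s, iteratedDeriv n (fun z => g j * (z ^ j * iteratedDeriv j φ z)) 0 := by
        simp only [iteratedDeriv_const_mul_field,
          iteratedDeriv_pow_mul_iteratedDeriv_zero hφ.contDiff]
    _ = iteratedDeriv n (fun z => ∑ j ∈ s, g j * (z ^ j * iteratedDeriv j φ z)) 0 :=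
        (iteratedDeriv_fun_sum fun j _ =>
          ((hsmooth j).of_le (mod_cast le_top)).contDiffAt).symm
    _ = 0 := by simp [h_complex]

lemma exists_polynomial_of_not_linearIndependent (hφ : Differentiable ℂ φ)
    (h : ¬ LinearIndependent ℂ fun (j : ℕ) (x : ℝ) => (x : ℂ) ^ j * iteratedDeriv j φ x) :
    ∃ p : Polynomial ℂ, ∀ z : ℂ, φ z = p.eval z := by
  rw [linearIndependent_iff'] at h
  push Not at h
  obtain ⟨s, g, hsum, i, his, hgi⟩ := h
  have relation (x : ℝ) : ∑ j ∈ s, g j * ((x : ℂ) ^ j * iteratedDeriv j φ x) = 0 := by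
    simpa using congrFun hsum x
  set P : Polynomial ℂ := ∑ j ∈ s, g j • descPochhammerSequence ℂ j with hP
  have P_ne_zero : P ≠ 0 := fun hP0 =>
    hgi (linearIndependent_iff'.mp (descPochhammerSequence ℂ).linearIndependent s g hP0 i his)
  have isRoot_of_ne_zero {n : ℕ} (hn : iteratedDeriv n φ 0 ≠ 0) : P.IsRoot n := by
    have hPn : P.eval (n : ℂ) * iteratedDeriv n φ 0 =
        ∑ j ∈ s, g j * (n.descFactorial j * iteratedDeriv n φ 0) := by
      simp [hP, descPochhammerSequence, descPochhammer_eval_eq_descFactorial,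
        Polynomial.eval_finsetSum, Finset.sum_mul, mul_assoc]
    rw [sum_mul_descFactorial_mul_iteratedDeriv_eq_zero hφ relation n] at hPn
    exact (mul_eq_zero.mp hPn).resolve_right hn
  exact exists_polynomial_of_finite_iteratedDeriv_zero hφ <|
    ((Polynomial.finite_setOfPred_isRoot P_ne_zero).preimage
      (Nat.cast_injective (R := ℂ)).injOn).subset fun _ => isRoot_of_ne_zero

end EntireFunction

section MultiplierSpace

open Polynomial

/-- The span of the functions `1`, `x` and `x^j φ^{(j)}(x)`, `j ≥ 1`, by which the operators `1`,
`m` and `m_j` multiply. They are taken on all of `ℝ`, not on `(0, ∞)`, because `gphi` consists of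
operators on functions on `ℝ`. -/
def multiplierSpace (φ : ℂ → ℂ) : Submodule ℂ (ℝ → ℂ) :=
  Submodule.span ℂ ({1, fun x : ℝ => (x : ℂ)} ∪
    Set.range fun (j : ℕ) (x : ℝ) => (x : ℂ) ^ (j + 1) * iteratedDeriv (j + 1) φ x)

lemma exists_polynomial_of_finiteDimensional_multiplierSpace {φ : ℂ → ℂ}
    (hφ : Differentiable ℂ φ) [FiniteDimensional ℂ (multiplierSpace φ)] :
    ∃ p : ℂ[X], ∀ z : ℂ, φ z = p.eval z := by
  refine exists_polynomial_of_not_linearIndependent hφ fun h => ?_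
  let v (j : ℕ) : multiplierSpace φ :=
    ⟨fun x : ℝ => (x : ℂ) ^ (j + 1) * iteratedDeriv (j + 1) φ x,
      Submodule.subset_span (.inr ⟨j, rfl⟩)⟩
  have hv : LinearIndependent ℂ v :=
    .of_comp (multiplierSpace φ).subtype (h.comp (· + 1) (add_left_injective 1))
  have := hv.finite
  exact not_finite ℕ

/-- Restriction of polynomial functions to the real line. -/
def evalOnReals : ℂ[X] →ₗ[ℂ] ℝ → ℂ := LinearMap.pi fun x => leval (x : ℂ)

lemma evalOnReals_apply (p : ℂ[X]) (x : ℝ) : evalOnReals p x = p.eval (x : ℂ) := rfl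

lemma evalOnReals_injective : Function.Injective evalOnReals := fun p q h =>
  eq_of_infinite_eval_eq p q <|
    (Set.infinite_range_of_injective Complex.ofReal_injective).mono <|
      Set.range_subset_iff.mpr fun x => congrFun h x

lemma multiplierSpace_polynomial (p : ℂ[X]) :
    multiplierSpace (fun z => p.eval z) =
      (Submodule.span ℂ ((fun i : ℕ => (X ^ i : ℂ[X])) ''
        (insert 0 (insert 1 p.support) : Finset ℕ))).map evalOnReals := by
  have eval_one : evalOnReals 1 = 1 := by ext; simp [evalOnReals_apply]
  have eval_X : evalOnReals X = fun x : ℝ => (x : ℂ) := by ext; simp [evalOnReals_apply]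
  have eval_derivative :
      (evalOnReals ∘ fun j : ℕ => X ^ (j + 1) * derivative^[j + 1] p) =
        fun (j : ℕ) (x : ℝ) => (x : ℂ) ^ (j + 1) * iteratedDeriv (j + 1) (fun z => p.eval z) x := by
    ext
    simp [evalOnReals_apply, iteratedDeriv_polynomial_eval]
  rw [← span_one_X_union_X_pow_mul_iterate_derivative, Submodule.map_span, Set.image_union,
    Set.image_pair, ← Set.range_comp, eval_one, eval_X, eval_derivative, multiplierSpace]

instance finiteDimensional_multiplierSpace_polynomial (p : ℂ[X]) :
    FiniteDimensional ℂ (multiplierSpace fun z => p.eval z) := by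
  rw [multiplierSpace_polynomial]
  have := FiniteDimensional.span_of_finite ℂ
    ((insert 0 (insert 1 p.support)).finite_toSet.image fun i : ℕ => (X ^ i : ℂ[X]))
  infer_instance

lemma finrank_multiplierSpace_polynomial (p : ℂ[X]) :
    Module.finrank ℂ (multiplierSpace fun z => p.eval z) =
      (insert 0 (insert 1 p.support)).card := by
  have X_pow_linearIndependent :
      LinearIndependent ℂ fun i : ℕ => (X ^ i : ℂ[X]) := by
    simpa only [coe_basisMonomials, X_pow_eq_monomial] using
      (basisMonomials ℂ).linearIndependent
  rw [multiplierSpace_polynomial,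
    ← (Submodule.equivMapOfInjective _ evalOnReals_injective _).finrank_eq, Set.image_eq_range]
  exact (finrank_span_eq_card (X_pow_linearIndependent.comp _ Subtype.val_injective)).trans
    (Fintype.card_coe _)

end MultiplierSpace

section Operator

variable {N : ℕ} {a : ℕ → ℝ} {ν : ℝ} {φ : ℂ → ℂ}

/-- The operator `Q ↦ f Q` of multiplication by a scalar function, linear in `f`. -/
def mulOp (N : ℕ) : (ℝ → ℂ) →ₗ[ℂ] (ℝ → MatC N) → ℝ → MatC N where
  toFun f Q x := f x • Q x
  map_add' f g := by ext; simp [add_mul]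
  map_smul' c f := by ext; simp [mul_assoc]

lemma mulOp_apply (f : ℝ → ℂ) (Q : ℝ → MatC N) (x : ℝ) : mulOp N f Q x = f x • Q x := rfl

lemma mulOp_injective [NeZero N] : Function.Injective (mulOp N) := fun f g h => by
  ext x
  simpa [mulOp_apply] using congrFun (congrFun (congrFun (congrFun h fun _ => 1) x) 0) 0

lemma gphi_eq_map_multiplierSpace_sup_span_pair (N : ℕ) (a : ℕ → ℝ) (ν : ℝ) (φ : ℂ → ℂ) :
    gphi N a ν φ =
      (multiplierSpace φ).map (mulOp N) ⊔ Submodule.span ℂ {OpD N a, OpDdag N ν φ} := by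
  have mulOp_one : mulOp N 1 = id := by ext; simp [mulOp_apply]
  have mulOp_ofReal : mulOp N (fun x : ℝ => (x : ℂ)) = OpM N := rfl
  have mulOp_derivative :
      (mulOp N ∘ fun (j : ℕ) (x : ℝ) => (x : ℂ) ^ (j + 1) * iteratedDeriv (j + 1) φ x) =
        fun j => OpMj N φ (j + 1) := rfl
  rw [gphi, multiplierSpace, Submodule.map_span, Set.image_union, Set.image_pair,
    ← Set.range_comp, mulOp_one, mulOp_ofReal, mulOp_derivative, ← Submodule.span_union]
  congr 1
  grind

lemma OpD_smul_one_apply_diag {f : ℝ → ℂ} {f' : ℂ} {x : ℝ} (hf : HasDerivAt f f' x) (i : Fin N) :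
    OpD N a (fun y => f y • 1) x i i = x * f' - x * f x := by
  have hQ : deriv (fun y => f y • (1 : MatC N)) x = f' • 1 := (hf.smul_const 1).deriv
  have hA : Amat N a i i = 0 := by simp [Amat]
  simp only [OpD, hQ, Matrix.add_apply, Matrix.smul_apply, Matrix.sub_apply, smul_mul_assoc,
    one_mul, one_apply_eq, hA, smul_eq_mul]
  ring

lemma OpDdag_smul_one_apply_diag {f : ℝ → ℂ} {f' : ℂ} {x : ℝ} (hf : HasDerivAt f f' x)
    (i : Fin N) :
    OpDdag N ν φ (fun y => f y • 1) x i i =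
      -(x * f') + (x * deriv φ x - x - (ν + i + 2)) * f x := by
  have hQ : deriv (fun y => f y • (1 : MatC N)) x = f' • 1 := (hf.smul_const 1).deriv
  have hJ : Jmat N i i = i + 1 := diagonal_apply_eq _ i
  simp only [OpDdag, hQ, Matrix.add_apply, Matrix.sub_apply, Matrix.neg_apply, Matrix.smul_apply,
    smul_mul_assoc, one_mul, one_apply_eq, hJ, smul_eq_mul]
  ring

lemma eq_zero_of_mulOp_add_smul_OpD_add_smul_OpDdag_eq_zero (hN : 2 ≤ N) {f : ℝ → ℂ} {α β : ℂ}
    (h : mulOp N f + (α • OpD N a + β • OpDdag N ν φ) = 0) : f = 0 ∧ α = 0 ∧ β = 0 := by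
  have diag_eq_zero {u : ℝ → ℂ} {u' : ℂ} {x : ℝ} (hu : HasDerivAt u u' x) (i : Fin N) :
      f x * u x + (α * (x * u' - x * u x) +
        β * (-(x * u') + (x * deriv φ x - x - (ν + i + 2)) * u x)) = 0 := by
    rw [← OpD_smul_one_apply_diag (a := a) hu i, ← OpDdag_smul_one_apply_diag (ν := ν) hu i]
    simpa [mulOp_apply] using congrFun₂ (congrFun₂ h (fun y => u y • 1) x) i i
  have diag_one (x : ℝ) := diag_eq_zero (hasDerivAt_const x (1 : ℂ))
  have hβ : β = 0 := by
    have h0 := diag_one 1 ⟨0, by lia⟩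
    have h1 := diag_one 1 ⟨1, by lia⟩
    push_cast at h0 h1
    linear_combination h0 - h1
  have hα : α = 0 := by
    have h0 := diag_one 1 ⟨0, by lia⟩
    have h_id := diag_eq_zero Complex.ofRealCLM.hasDerivAt (x := 1) ⟨0, by lia⟩
    simp only [hβ, Complex.ofRealCLM_apply, Complex.ofReal_one] at h0 h_id
    linear_combination h_id - h0
  refine ⟨funext fun x => ?_, hα, hβ⟩
  simpa [hα, hβ] using diag_one x ⟨0, by lia⟩

lemma finrank_span_OpD_OpDdag (hN : 2 ≤ N) (a : ℕ → ℝ) (ν : ℝ) (φ : ℂ → ℂ) :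
    Module.finrank ℂ (Submodule.span ℂ {OpD N a, OpDdag N ν φ}) = 2 := by
  have h : LinearIndependent ℂ ![OpD N a, OpDdag N ν φ] := LinearIndependent.pair_iff.mpr
    fun α β h => (eq_zero_of_mulOp_add_smul_OpD_add_smul_OpDdag_eq_zero (f := 0) hN (by simpa)).2
  rw [← Matrix.range_cons_cons_empty, finrank_span_eq_card h, Fintype.card_fin]

lemma disjoint_range_mulOp_span_OpD_OpDdag (hN : 2 ≤ N) (a : ℕ → ℝ) (ν : ℝ) (φ : ℂ → ℂ) :
    Disjoint (mulOp N).range (Submodule.span ℂ {OpD N a, OpDdag N ν φ}) := by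
  rw [Submodule.disjoint_def]
  rintro _ ⟨f, rfl⟩ hf
  obtain ⟨α, β, hαβ⟩ := Submodule.mem_span_pair.mp hf
  have hf0 : -f = 0 :=
    (eq_zero_of_mulOp_add_smul_OpD_add_smul_OpDdag_eq_zero hN
      (by rw [hαβ, map_neg, neg_add_cancel])).1
  simp [neg_eq_zero.mp hf0]

lemma finiteDimensional_gphi_iff [NeZero N] :
    FiniteDimensional ℂ (gphi N a ν φ) ↔ FiniteDimensional ℂ (multiplierSpace φ) := by
  rw [gphi_eq_map_multiplierSpace_sup_span_pair]
  constructor <;> intro h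
  · have := Submodule.finiteDimensional_of_le (le_sup_left (a := (multiplierSpace φ).map (mulOp N))
      (b := Submodule.span ℂ {OpD N a, OpDdag N ν φ}))
    exact Module.Finite.equiv (Submodule.equivMapOfInjective (mulOp N) mulOp_injective _).symm
  · have := FiniteDimensional.span_of_finite ℂ (Set.toFinite {OpD N a, OpDdag N ν φ})
    infer_instance

lemma finrank_gphi (hN : 2 ≤ N) (a : ℕ → ℝ) (ν : ℝ) (φ : ℂ → ℂ)
    [FiniteDimensional ℂ (multiplierSpace φ)] :
    Module.finrank ℂ (gphi N a ν φ) = Module.finrank ℂ (multiplierSpace φ) + 2 := by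
  have : NeZero N := ⟨by lia⟩
  have := FiniteDimensional.span_of_finite ℂ (Set.toFinite {OpD N a, OpDdag N ν φ})
  have hdisj := (disjoint_range_mulOp_span_OpD_OpDdag hN a ν φ).mono_left
    (LinearMap.map_le_range (p := multiplierSpace φ))
  have hsum := Submodule.finrank_sup_add_finrank_inf_eq ((multiplierSpace φ).map (mulOp N))
    (Submodule.span ℂ {OpD N a, OpDdag N ν φ})
  rwa [hdisj.eq_bot, finrank_bot, add_zero, ← gphi_eq_map_multiplierSpace_sup_span_pair,
    finrank_span_OpD_OpDdag hN,
    ← (Submodule.equivMapOfInjective _ mulOp_injective _).finrank_eq] at hsum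

end Operator

theorem gphi_finiteDimensional_iff_polynomial_general (N : ℕ) [NeZero N] (a : ℕ → ℝ) (ν : ℝ)
    (φ : ℂ → ℂ) (hφ : Differentiable ℂ φ) :
    (FiniteDimensional ℂ (gphi N a ν φ) ↔ ∃ p : Polynomial ℂ, ∀ z : ℂ, φ z = p.eval z) ∧
    ∀ p : Polynomial ℂ, (∀ z : ℂ, φ z = p.eval z) → 2 ≤ N →
      Module.finrank ℂ (gphi N a ν φ) =
        p.support.card + (if p.coeff 1 = 0 then 1 else 0) + (if p.coeff 0 = 0 then 1 else 0) +
          2 := by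
  refine ⟨finiteDimensional_gphi_iff.trans ⟨fun _ => ?_, ?_⟩, ?_⟩
  · exact exists_polynomial_of_finiteDimensional_multiplierSpace hφ
  · rintro ⟨p, hp⟩
    obtain rfl := funext hp
    infer_instance
  · intro p hp hN
    obtain rfl := funext hp
    rw [finrank_gphi hN, finrank_multiplierSpace_polynomial, card_insert_zero_insert_one_support]

/-- `g_φ` is finite dimensional iff `φ` is a polynomial; if `φ` is a polynomial
with `ℓ` nonzero coefficients then `dim g_φ = k + 2` where `k = ℓ+2` if `φ(0) = φ'(0) = 0`,
`k = ℓ+1` if exactly one of `φ(0), φ'(0)` vanishes, and `k = ℓ` if both are nonzero.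
(Note `φ(0) = p.coeff 0` and `φ'(0) = p.coeff 1`.) -/
theorem gphi_finiteDimensional_iff_polynomial
    (N : ℕ) (hN : 2 ≤ N) (a : ℕ → ℝ) (ν : ℝ) (hν : 0 < ν)
    (φ : ℂ → ℂ) (hφ : Differentiable ℂ φ) :
    (FiniteDimensional ℂ ↥(gphi N a ν φ) ↔
      ∃ p : Polynomial ℂ, ∀ z : ℂ, φ z = p.eval z) ∧
    (∀ p : Polynomial ℂ, (∀ z : ℂ, φ z = p.eval z) →
      ((p.coeff 0 = 0 ∧ p.coeff 1 = 0 →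
          Module.finrank ℂ ↥(gphi N a ν φ) = p.support.card + 2 + 2) ∧
        (p.coeff 0 = 0 ∧ p.coeff 1 ≠ 0 →
          Module.finrank ℂ ↥(gphi N a ν φ) = p.support.card + 1 + 2) ∧
        (p.coeff 0 ≠ 0 ∧ p.coeff 1 = 0 →
          Module.finrank ℂ ↥(gphi N a ν φ) = p.support.card + 1 + 2) ∧
        (p.coeff 0 ≠ 0 ∧ p.coeff 1 ≠ 0 →
          Module.finrank ℂ ↥(gphi N a ν φ) = p.support.card + 2))) := by
  have : NeZero N := ⟨by lia⟩
  obtain ⟨hfd, hdim⟩ := gphi_finiteDimensional_iff_polynomial_general N a ν φ hφ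
  exact ⟨hfd, fun p hp => by simp +contextual [hdim p hp hN]⟩
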